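/- Let n ≥ 4 and let < be a linear order on the set of objects O with domain D_< of all single-peaked preferences w.r.t. <. Then no rule f : D_<^n → M is simultaneously efficient, individually rational, obviously strategy-proof, and satisfies equity⁺ under bipartite acclaim. -/

import Mathlib

/-!
The obstruction already lives on four agents and four profiles. Write `1, 2, 3, 4` for the owners of
the four `<`-lowest objects; everybody else ranks her own object first and hence keeps it by individual
rationality. Agents `1` and `2` report the same preference, `3421…` or `4321…`, and agents `3` and
`4` report the same preference, `1234…` or `2134…`. At each of the four resulting profiles there is
an acclaimed pair `{i, j}` with `i ∈ {1, 2}` and `j ∈ {3, 4}`; equity⁺ makes it swap, and efficiency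
makes the two other active agents swap as well whenever both want to (`allocation_at_profile`).

In an obviously strategy-proof implementation, the plays of the four profiles share a longest common
history, at which some agent separates two of her types; there, every outcome of one type across
the four profiles is weakly better, for that type, than every outcome of the other
(`OSP.exists_split`). Each of the four agents violates this:

* agent `1`, type `3421` misses `3` at `(3, 3, 2, 2)` (listing the peaks), which type `4321` gets at
  `(4, 4, 2, 2)`;
* agent `2`, type `3421` misses `3` at `(3, 3, 1, 1)`, which type `4321` gets at `(4, 4, 1, 1)`;
* agent `3`, type `2134` misses `2` at `(4, 4, 2, 2)`, which type `1234` gets at `(4, 4, 1, 1)`;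
* agent `4`, type `2134` misses `2` at `(3, 3, 2, 2)`, which type `1234` gets at `(3, 3, 1, 1)`.

Formally, the agents `1, 2, 3, 4` are those at positions `0, 1, 2, 3` of `σ`.
-/

/-- A preference is a strict linear order on the objects `Fin n`, encoded by its
rank function: `p o < p o'` means object `o` is strictly preferred to `o'`. -/
abbrev Pref (n : ℕ) := Fin n ≃ Fin n

/-- `o` is strictly preferred to `o'` under `p`. -/
def prefers {n : ℕ} (p : Pref n) (o o' : Fin n) : Prop := p o < p o'

/-- `o` is weakly preferred to `o'` under `p` (i.e. `o P o'` or `o = o'`). -/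
def weakPref {n : ℕ} (p : Pref n) (o o' : Fin n) : Prop := p o ≤ p o'

/-- The top-ranked object `r_1(p)`. -/
def topObj {n : ℕ} [NeZero n] (p : Pref n) : Fin n := p.symm 0

/-- The second-ranked object `r_2(p)`. -/
def secondObj {n : ℕ} [NeZero n] (p : Pref n) : Fin n := p.symm 1

/-- The `p`-best object of a (nonempty) finite set `S`: `max^p S`. -/
noncomputable def best {n : ℕ} [NeZero n] (p : Pref n) (S : Finset (Fin n)) : Fin n :=
  (S.toList.argmin (fun o => p o)).getD 0

/-- A profile belongs to the domain `D` coordinatewise. -/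
def inD {n : ℕ} (D : Set (Pref n)) (P : Fin n → Pref n) : Prop := ∀ i, P i ∈ D

/-- Individual rationality of an allocation at a profile: each agent `i` weakly
prefers her assigned object to her endowment `o_i = i`. -/
def IRAt {n : ℕ} (P : Fin n → Pref n) (m : Fin n → Fin n) : Prop :=
  ∀ i, weakPref (P i) (m i) i

/-- `m'` Pareto dominates `m` at profile `P`. -/
def ParetoDom {n : ℕ} (P : Fin n → Pref n) (m' m : Fin n → Fin n) : Prop :=
  (∀ i, weakPref (P i) (m' i) (m i)) ∧ ∃ j, prefers (P j) (m' j) (m j)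

/-- Pareto efficiency of an allocation at a profile. -/
def EffAt {n : ℕ} (P : Fin n → Pref n) (m : Fin n → Fin n) : Prop :=
  ¬ ∃ m' : Fin n → Fin n, Function.Bijective m' ∧ ParetoDom P m' m

/-- A rule maps profiles from the domain to allocations (bijections `N → O`). -/
def IsRule {n : ℕ} (D : Set (Pref n)) (f : (Fin n → Pref n) → (Fin n → Fin n)) : Prop :=
  ∀ P, inD D P → Function.Bijective (f P)

def Efficient {n : ℕ} (D : Set (Pref n)) (f : (Fin n → Pref n) → (Fin n → Fin n)) : Prop :=
  ∀ P, inD D P → EffAt P (f P)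

def IndRational {n : ℕ} (D : Set (Pref n)) (f : (Fin n → Pref n) → (Fin n → Fin n)) : Prop :=
  ∀ P, inD D P → IRAt P (f P)

def StrategyProof {n : ℕ} (D : Set (Pref n)) (f : (Fin n → Pref n) → (Fin n → Fin n)) : Prop :=
  ∀ P, inD D P → ∀ i, ∀ p' ∈ D, weakPref (P i) (f P i) (f (Function.update P i p') i)

/-- The active agents at profile `P` (those whose top object differs from their
endowment); since `o_i = i`, the set of active objects coincides with it. -/
def activeAgents {n : ℕ} [NeZero n] (P : Fin n → Pref n) : Finset (Fin n) :=
  Finset.univ.filter (fun i => topObj (P i) ≠ i)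

/-- Agent `i` is the acclaimed agent at profile `P`. -/
def acclaimed {n : ℕ} [NeZero n] (P : Fin n → Pref n) (i : Fin n) : Prop :=
  2 < (activeAgents P).card ∧ i ∈ activeAgents P ∧
    best (P i) (activeAgents P) ≠ i ∧
    ∀ j ∈ activeAgents P, j ≠ i → best (P j) (activeAgents P) = i

/-- Equity under unanimous acclaim. -/
def EquityUA {n : ℕ} [NeZero n] (D : Set (Pref n))
    (f : (Fin n → Pref n) → (Fin n → Fin n)) : Prop :=
  ∀ P, inD D P → ∀ i, acclaimed P i → f P i = best (P i) (activeAgents P)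

/-- Agents `i` and `j` form the acclaimed pair at profile `P`. -/
def acclaimedPair {n : ℕ} [NeZero n] (P : Fin n → Pref n) (i j : Fin n) : Prop :=
  ∃ Ni Nj : Finset (Fin n),
    Disjoint Ni Nj ∧ Ni ∪ Nj = activeAgents P ∧ Ni.card = Nj.card ∧ 1 < Ni.card ∧
    i ∈ Nj ∧ j ∈ Ni ∧
    (∀ l ∈ Ni, best (P l) (activeAgents P) = i) ∧
    (∀ l ∈ Nj, best (P l) (activeAgents P) = j)

/-- Equity under bipartite acclaim. -/
def EquityBA {n : ℕ} [NeZero n] (D : Set (Pref n))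
    (f : (Fin n → Pref n) → (Fin n → Fin n)) : Prop :=
  ∀ P, inD D P → ∀ i j, acclaimedPair P i j → f P i = j ∨ f P j = i

/-- Equity⁺ under bipartite acclaim. -/
def EquityPlusBA {n : ℕ} [NeZero n] (D : Set (Pref n))
    (f : (Fin n → Pref n) → (Fin n → Fin n)) : Prop :=
  ∀ P, inD D P → ∀ i j, acclaimedPair P i j → f P i = j ∧ f P j = i

/-- Single-peakedness of `p` w.r.t. the linear order on objects encoded by the
position permutation `σ` (`o < o'` iff `σ o < σ o'`). -/
def singlePeaked {n : ℕ} [NeZero n] (σ : Fin n ≃ Fin n) (p : Pref n) : Prop :=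
  ∀ o o' : Fin n,
    ((σ o' < σ o ∧ σ o < σ (topObj p)) ∨ (σ (topObj p) < σ o ∧ σ o < σ o')) →
    prefers p o o'

/-- The full single-peaked domain `D_<`. -/
def spDomain {n : ℕ} [NeZero n] (σ : Fin n ≃ Fin n) : Set (Pref n) :=
  {p | singlePeaked σ p}

/-- `D` is a single-peaked domain. -/
def IsSPDomain {n : ℕ} [NeZero n] (D : Set (Pref n)) : Prop :=
  ∃ σ : Fin n ≃ Fin n, D ⊆ spDomain σ

/-- Objects `o` and `o'` are connected in `D`: `o ∼ o'`. -/
def connectedObj {n : ℕ} [NeZero n] (D : Set (Pref n)) (o o' : Fin n) : Prop :=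
  ∃ p ∈ D, ∃ p' ∈ D, topObj p = o ∧ secondObj p = o' ∧ topObj p' = o' ∧ secondObj p' = o

/-- `D` is path-connected. -/
def pathConnected {n : ℕ} [NeZero n] (D : Set (Pref n)) : Prop :=
  ∀ o o' : Fin n, o ≠ o' → ∃ l : List (Fin n),
    l.Nodup ∧ l.head? = some o ∧ l.getLast? = some o' ∧ l.Chain' (connectedObj D)

/-- `p` and `p'` rank all objects in exactly opposite orders. -/
def reversedPair {n : ℕ} (p p' : Pref n) : Prop :=
  ∀ o o', prefers p o o' ↔ prefers p' o' o

/-- A rich domain: path-connected and containing two completely reversed preferences. -/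
def richDomain {n : ℕ} [NeZero n] (D : Set (Pref n)) : Prop :=
  pathConnected D ∧ ∃ p ∈ D, ∃ p' ∈ D, reversedPair p p'

/-- The restriction `→(x,y,z) ∈ R(D)`: whenever `x` is the best of `{x,y,z}`,
`y` is ranked above `z`. -/
def RestrR {n : ℕ} [NeZero n] (D : Set (Pref n)) (x y z : Fin n) : Prop :=
  ∀ p ∈ D, best p {x, y, z} = x → prefers p y z

/-- The ternary relation `(x,y,z) ∈ B(D)`. -/
def RelB {n : ℕ} [NeZero n] (D : Set (Pref n)) (x y z : Fin n) : Prop :=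
  RestrR D x y z ∧ RestrR D z y x

/-! ### Extensive game forms and obvious strategy-proofness -/

/-- An extensive game form: a finite rooted tree of histories (lists of actions,
prefix-closed), a player function and an outcome function on terminal histories. -/
structure GameForm (n : ℕ) where
  hist : Finset (List ℕ)
  root_mem : [] ∈ hist
  prefix_closed : ∀ h a, h ++ [a] ∈ hist → h ∈ hist
  player : List ℕ → Fin n
  outcome : List ℕ → (Fin n → Fin n)

/-- A strategy chooses an action at every history. -/
abbrev Strategy : Type := List ℕ → ℕ

/-- Terminal histories of the game form. -/
def GameForm.Terminal {n : ℕ} (Γ : GameForm n) (h : List ℕ) : Prop :=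
  h ∈ Γ.hist ∧ ∀ a, h ++ [a] ∉ Γ.hist

/-- A strategy of agent `i` is valid if it always chooses a feasible action. -/
def GameForm.ValidStrat {n : ℕ} (Γ : GameForm n) (i : Fin n) (s : Strategy) : Prop :=
  ∀ h ∈ Γ.hist, ¬ Γ.Terminal h → Γ.player h = i → h ++ [s h] ∈ Γ.hist

/-- Play from `h` under the strategy profile `s` reaches history `h'`. -/
inductive GameForm.Reaches {n : ℕ} (Γ : GameForm n) (s : Fin n → Strategy) :
    List ℕ → List ℕ → Prop
  | refl (h : List ℕ) : GameForm.Reaches Γ s h h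
  | step {h h' : List ℕ} : GameForm.Reaches Γ s h h' → h' ∈ Γ.hist → ¬ Γ.Terminal h' →
      GameForm.Reaches Γ s h (h' ++ [s (Γ.player h') h'])

/-- `o` belongs to the feasible set `X_i(h, s_i)` of agent `i` at history `h`
given her strategy `si`. -/
def GameForm.Feas {n : ℕ} (Γ : GameForm n) (i : Fin n) (h : List ℕ) (si : Strategy)
    (o : Fin n) : Prop :=
  ∃ s : Fin n → Strategy, (∀ j, Γ.ValidStrat j (s j)) ∧ s i = si ∧
    ∃ t, Γ.Reaches s h t ∧ Γ.Terminal t ∧ Γ.outcome t i = o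

/-- `h` is a decision node of `i` reachable (on-path) when `i` plays `si`. -/
def GameForm.ReachableNode {n : ℕ} (Γ : GameForm n) (i : Fin n) (si : Strategy)
    (h : List ℕ) : Prop :=
  h ∈ Γ.hist ∧ ¬ Γ.Terminal h ∧ Γ.player h = i ∧
    ∃ s : Fin n → Strategy, (∀ j, Γ.ValidStrat j (s j)) ∧ s i = si ∧ Γ.Reaches s [] h

/-- `si` obviously dominates `si'` at preference `p`: at every earliest point of
departure, the worst feasible outcome under `si` is weakly preferred to the best
feasible outcome under `si'`. -/
def GameForm.ObvDom {n : ℕ} (Γ : GameForm n) (i : Fin n) (p : Pref n)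
    (si si' : Strategy) : Prop :=
  ∀ h, Γ.ReachableNode i si h → Γ.ReachableNode i si' h → si h ≠ si' h →
    ∀ o o', Γ.Feas i h si o → Γ.Feas i h si' o' → weakPref p o o'

/-- Obvious strategy-proofness of a rule `f` on domain `D`. -/
def OSP {n : ℕ} (D : Set (Pref n)) (f : (Fin n → Pref n) → (Fin n → Fin n)) : Prop :=
  ∃ (Γ : GameForm n) (S : Fin n → Pref n → Strategy),
    (∀ i p, p ∈ D → Γ.ValidStrat i (S i p)) ∧
    (∀ i p, p ∈ D → ∀ s', Γ.ValidStrat i s' → Γ.ObvDom i p (S i p) s') ∧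
    (∀ P : Fin n → Pref n, inD D P →
      ∃ t, Γ.Reaches (fun j => S j (P j)) [] t ∧ Γ.Terminal t ∧ Γ.outcome t = f P)

/-! ### The crawler, the designator, and top trading cycles -/

/-- The running state of the crawler/designator algorithms: the sub-allocation of
objects currently held by remaining agents, and the final assignments so far. -/
structure AlgState (n : ℕ) where
  held : Fin n → Option (Fin n)
  res : Fin n → Option (Fin n)

/-- The object currently held by agent `i`. -/
def heldObj {n : ℕ} [NeZero n] (st : AlgState n) (i : Fin n) : Fin n := (st.held i).getD 0

/-- The remaining agents. -/
def remAgents {n : ℕ} (st : AlgState n) : Finset (Fin n) :=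
  Finset.univ.filter (fun i => (st.held i).isSome)

/-- The remaining objects. -/
def remObjs {n : ℕ} [NeZero n] (st : AlgState n) : Finset (Fin n) :=
  (remAgents st).image (heldObj st)

/-- The object of `S` adjacently larger than `o` w.r.t. the order `σ`. -/
noncomputable def adjLarger {n : ℕ} (σ : Fin n ≃ Fin n) (S : Finset (Fin n)) (o : Fin n) : Fin n :=
  ((S.filter (fun o' => σ o < σ o')).toList.argmin (fun o' => σ o')).getD o

/-- The agent `i^s` leaving at the current step: the remaining agent holding the
`σ`-smallest object among those whose best remaining object is weakly below their
held object. -/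
noncomputable def leaver {n : ℕ} [NeZero n] (σ : Fin n ≃ Fin n) (P : Fin n → Pref n)
    (st : AlgState n) : Option (Fin n) :=
  ((remAgents st).filter
      (fun i => σ (best (P i) (remObjs st)) ≤ σ (heldObj st i))).toList.argmin
    (fun i => σ (heldObj st i))

/-- One step of the crawler: the leaving agent takes her best remaining object,
and every remaining agent holding an object weakly above the taken object and
strictly below the leaver's object crawls to the adjacently larger object. -/
noncomputable def crawlerStep {n : ℕ} [NeZero n] (σ : Fin n ≃ Fin n) (P : Fin n → Pref n)
    (st : AlgState n) : AlgState n :=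
  match leaver σ P st with
  | none => st
  | some is =>
    let taken := best (P is) (remObjs st)
    { held := fun j =>
        if j = is then none
        else if (st.held j).isSome = true ∧ σ taken ≤ σ (heldObj st j) ∧
            σ (heldObj st j) < σ (heldObj st is) then
          some (adjLarger σ (remObjs st) (heldObj st j))
        else st.held j,
      res := Function.update st.res is (some taken) }

/-- Initially every agent holds her endowment `o_i = i`. -/
def crawlerInit (n : ℕ) : AlgState n := ⟨fun i => some i, fun _ => none⟩

/-- The crawler rule w.r.t. the object order `σ`. -/
noncomputable def crawler {n : ℕ} [NeZero n] (σ : Fin n ≃ Fin n) (P : Fin n → Pref n) :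
    Fin n → Fin n :=
  fun i => (((crawlerStep σ P)^[n] (crawlerInit n)).res i).getD 0

/-- `τ(i)`: the active agent whose endowment is `max^{P_i} O_{m̄⁰}`. -/
noncomputable def desTau {n : ℕ} [NeZero n] (P : Fin n → Pref n) (i : Fin n) : Fin n :=
  best (P i) (activeAgents P)

/-- Stage I of the designator: null agents receive their endowments and leave. -/
def desInit {n : ℕ} [NeZero n] (P : Fin n → Pref n) : AlgState n :=
  { held := fun i => if topObj (P i) = i then none else some i,
    res := fun i => if topObj (P i) = i then some i else none }

/-- One step of Stage II of the designator: the leaving agent `i^s` takes her best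
remaining object; if `τ(i^s)` is remaining and holds an object weakly above the
taken object and strictly below `i^s`'s held object, then `τ(i^s)` directly
inherits `i^s`'s object and only agents below `τ(i^s)` crawl (designating);
otherwise the crawling updating applies. -/
noncomputable def desStep {n : ℕ} [NeZero n] (σ : Fin n ≃ Fin n) (P : Fin n → Pref n)
    (st : AlgState n) : AlgState n :=
  match leaver σ P st with
  | none => st
  | some is =>
    let taken := best (P is) (remObjs st)
    let t := desTau P is
    if (st.held t).isSome = true ∧ σ taken ≤ σ (heldObj st t) ∧
        σ (heldObj st t) < σ (heldObj st is) then
      { held := fun j =>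
          if j = is then none
          else if j = t then some (heldObj st is)
          else if (st.held j).isSome = true ∧ σ taken ≤ σ (heldObj st j) ∧
              σ (heldObj st j) < σ (heldObj st t) then
            some (adjLarger σ (remObjs st) (heldObj st j))
          else st.held j,
        res := Function.update st.res is (some taken) }
    else
      { held := fun j =>
          if j = is then none
          else if (st.held j).isSome = true ∧ σ taken ≤ σ (heldObj st j) ∧
              σ (heldObj st j) < σ (heldObj st is) then
            some (adjLarger σ (remObjs st) (heldObj st j))
          else st.held j,
        res := Function.update st.res is (some taken) }

/-- The designator rule w.r.t. the object order `σ`. -/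
noncomputable def designator {n : ℕ} [NeZero n] (σ : Fin n ≃ Fin n) (P : Fin n → Pref n) :
    Fin n → Fin n :=
  fun i => (((desStep σ P)^[n] (desInit P)).res i).getD 0

/-- One round of top trading cycles: every remaining agent points to the owner of
her favorite remaining object (owner of object `o` is agent `o`), and every agent
lying on a pointing cycle receives the object she points to and leaves. -/
noncomputable def ttcStep {n : ℕ} [NeZero n] (P : Fin n → Pref n) (res : Fin n → Option (Fin n)) :
    Fin n → Option (Fin n) :=
  let rem : Finset (Fin n) := Finset.univ.filter (fun i => res i = none)
  let pt : Fin n → Fin n := fun i => best (P i) rem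
  fun i =>
    match res i with
    | some o => some o
    | none =>
      if (List.range (n + 1)).any (fun k => (k != 0) && (pt^[k] i == i)) then some (pt i)
      else none

/-- The top-trading-cycle rule. -/
noncomputable def ttc {n : ℕ} [NeZero n] (P : Fin n → Pref n) : Fin n → Fin n :=
  fun i => (((ttcStep P)^[n] (fun _ => none)) i).getD 0

/-! ### Plays of an extensive game form -/

namespace GameForm

variable {n : ℕ} {Γ : GameForm n} {s : Fin n → Strategy}

theorem Reaches.eq_of_terminal {h t : List ℕ} (hr : Γ.Reaches s h t) (ht : Γ.Terminal h) :
    t = h := by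
  induction hr with
  | refl => rfl
  | step _ _ hn ih => subst ih; exact absurd ht hn

theorem Reaches.head {h t : List ℕ} (hr : Γ.Reaches s h t) :
    t = h ∨ Γ.Reaches s (h ++ [s (Γ.player h) h]) t := by
  induction hr with
  | refl => exact Or.inl rfl
  | step _ hm hn ih =>
    rcases ih with rfl | ih
    · exact Or.inr (Reaches.refl _)
    · exact Or.inr (Reaches.step ih hm hn)

/-- The play of a strategy profile is unique, so two histories on it are comparable. -/
theorem Reaches.total {h t u : List ℕ} (ht : Γ.Reaches s h t) (hu : Γ.Reaches s h u) :
    Γ.Reaches s t u ∨ Γ.Reaches s u t := by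
  induction hu with
  | refl => exact Or.inr ht
  | step _ hm hn ih =>
    rcases ih with ih | ih
    · exact Or.inl (Reaches.step ih hm hn)
    · rcases ih.head with rfl | ih
      · exact Or.inl (Reaches.step (Reaches.refl _) hm hn)
      · exact Or.inr ih

theorem Reaches.to_terminal {h t u : List ℕ} (ht : Γ.Reaches s h t) (hu : Γ.Reaches s h u)
    (hT : Γ.Terminal u) : Γ.Reaches s t u := by
  rcases ht.total hu with h1 | h1
  · exact h1
  · rw [h1.eq_of_terminal hT]; exact Reaches.refl _

end GameForm

/-- On any set `T` of profiles on which an obviously strategy-proof rule is not constant, some agent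
must separate two of her types: at the longest history common to the plays of all profiles in
`T`, her two types choose different actions, and every outcome in `T` is still possible. -/
theorem OSP.exists_split {n : ℕ} {D : Set (Pref n)} {f : (Fin n → Pref n) → (Fin n → Fin n)}
    (hf : OSP D f) (T : Set (Fin n → Pref n)) (hD : ∀ P ∈ T, inD D P)
    (hne : ∃ P ∈ T, ∃ Q ∈ T, f P ≠ f Q) :
    ∃ i, ∃ P₀ ∈ T, ∃ Q₀ ∈ T, P₀ i ≠ Q₀ i ∧ ∀ P ∈ T, ∀ Q ∈ T, P i = P₀ i → Q i = Q₀ i →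
      weakPref (P₀ i) (f P i) (f Q i) ∧ weakPref (Q₀ i) (f Q i) (f P i) := by
  classical
  obtain ⟨Γ, S, hV, hO, hX⟩ := hf
  obtain ⟨P₁, hP₁, Q₁, hQ₁, hfne⟩ := hne
  -- a history common to all plays, of maximal length
  obtain ⟨h, hh, hmax⟩ := Finset.exists_max_image
    (Γ.hist.filter fun h => ∀ P ∈ T, Γ.Reaches (fun j => S j (P j)) [] h) List.length
    ⟨[], Finset.mem_filter.2 ⟨Γ.root_mem, fun _ _ => GameForm.Reaches.refl _⟩⟩
  obtain ⟨hmem, hreach⟩ := Finset.mem_filter.1 hh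
  have hplay : ∀ P ∈ T, ∃ t, Γ.Reaches (fun j => S j (P j)) h t ∧ Γ.Terminal t ∧
      Γ.outcome t = f P := by
    intro P hP
    obtain ⟨t, h1, h2, h3⟩ := hX P (hD P hP)
    exact ⟨t, (hreach P hP).to_terminal h1 h2, h2, h3⟩
  have hnt : ¬ Γ.Terminal h := by
    intro hT
    apply hfne
    obtain ⟨t, h1, -, h3⟩ := hplay P₁ hP₁
    obtain ⟨u, g1, -, g3⟩ := hplay Q₁ hQ₁
    rw [← h3, ← g3, h1.eq_of_terminal hT, g1.eq_of_terminal hT]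
  have hsplit : ∃ Q ∈ T, S (Γ.player h) (P₁ (Γ.player h)) h ≠ S (Γ.player h) (Q (Γ.player h)) h := by
    by_contra! hcon
    have := hmax (h ++ [S (Γ.player h) (P₁ (Γ.player h)) h]) (Finset.mem_filter.2
      ⟨hV _ _ (hD P₁ hP₁ _) h hmem hnt rfl, fun P hP => by
        rw [hcon P hP]
        exact GameForm.Reaches.step (hreach P hP) hmem hnt⟩)
    simp at this
  obtain ⟨Q₂, hQ₂, hact⟩ := hsplit
  have hdom : ∀ P ∈ T, ∀ Q ∈ T,
      S (Γ.player h) (P (Γ.player h)) h ≠ S (Γ.player h) (Q (Γ.player h)) h →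
      weakPref (P (Γ.player h)) (f P (Γ.player h)) (f Q (Γ.player h)) := by
    intro P hP Q hQ hPQ
    have hnode : ∀ R ∈ T, Γ.ReachableNode (Γ.player h) (S (Γ.player h) (R (Γ.player h))) h :=
      fun R hR => ⟨hmem, hnt, rfl, fun j => S j (R j), fun j => hV j _ (hD R hR j), rfl, hreach R hR⟩
    have hfeas : ∀ R ∈ T, Γ.Feas (Γ.player h) h (S (Γ.player h) (R (Γ.player h)))
        (f R (Γ.player h)) := by
      intro R hR
      obtain ⟨t, h1, h2, h3⟩ := hplay R hR
      exact ⟨fun j => S j (R j), fun j => hV j _ (hD R hR j), rfl, t, h1, h2, by rw [h3]⟩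
    exact hO _ _ (hD P hP _) _ (hV _ _ (hD Q hQ _)) h (hnode P hP) (hnode Q hQ) hPQ _ _
      (hfeas P hP) (hfeas Q hQ)
  refine ⟨Γ.player h, P₁, hP₁, Q₂, hQ₂, fun hE => hact (by rw [hE]), ?_⟩
  intro P hP Q hQ hPi hQi
  rw [← hPi, ← hQi] at hact ⊢
  exact ⟨hdom P hP Q hQ hact, hdom Q hQ P hP hact.symm⟩

/-! ### Tops and efficient swaps -/

theorem topObj_eq_iff {n : ℕ} [NeZero n] (p : Pref n) (o : Fin n) : topObj p = o ↔ p o = 0 := by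
  unfold topObj
  rw [Equiv.symm_apply_eq, eq_comm]

theorem best_eq_of_top {n : ℕ} [NeZero n] {p : Pref n} {S : Finset (Fin n)} {o : Fin n}
    (ho : o ∈ S) (hp : p o = 0) : best p S = o := by
  unfold best
  cases hm : S.toList.argmin (fun o => p o) with
  | none =>
    rw [List.argmin_eq_none, Finset.toList_eq_nil] at hm
    simp [hm] at ho
  | some m =>
    have h1 : p m ≤ p o := List.le_of_mem_argmin (Finset.mem_toList.2 ho) hm
    rw [hp] at h1
    exact p.injective ((nonpos_iff_eq_zero.1 h1).trans hp.symm)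

/-- If everybody but `k` and `l` gets an object other than `o_k, o_l`, and `k` and `l` both want
to trade endowments, then efficiency forces them to do so. -/
theorem EffAt.swap {n : ℕ} {P : Fin n → Pref n} {m : Fin n → Fin n} (hE : EffAt P m)
    (hb : Function.Bijective m) {k l : Fin n} (hk : m k = k ∨ m k = l) (hl : m l = k ∨ m l = l)
    (hkl : prefers (P k) l k) (hlk : prefers (P l) k l) : m k = l ∧ m l = k := by
  have hne : k ≠ l := by rintro rfl; exact lt_irrefl _ hkl
  rcases hk with hk | hk
  · have hl' : m l = l := hl.resolve_left fun h => hne (hb.1 (hk.trans h.symm))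
    refine absurd ⟨m ∘ Equiv.swap k l, hb.comp (Equiv.bijective _), fun i => ?_, k, ?_⟩ hE
    · unfold weakPref
      by_cases h1 : i = k
      · subst h1; simpa [hk, hl'] using le_of_lt hkl
      by_cases h2 : i = l
      · subst h2; simpa [hk, hl'] using le_of_lt hlk
      simp [Equiv.swap_apply_of_ne_of_ne h1 h2]
    · simpa [hk, hl'] using hkl
  · exact ⟨hk, hl.resolve_right fun h => hne (hb.1 (hk.trans h.symm))⟩

/-! ### The four preferences and the four profiles -/

/-- The permutation of positions `k, k-1, …, 0, k+1, …, n-1`, as a rank function. -/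
def revRank {n : ℕ} (k : Fin n) : Fin n ≃ Fin n :=
  Function.Involutive.toPerm
    (fun x => ⟨if x.1 ≤ k.1 then k.1 - x.1 else x.1, by split <;> omega⟩) <| by
    intro x
    ext
    dsimp only
    split_ifs <;> omega

theorem revRank_val {n : ℕ} (k x : Fin n) :
    (revRank k x).1 = if x.1 ≤ k.1 then k.1 - x.1 else x.1 := rfl

/-- The single-peaked preference with peak at position `k` ranking all objects below the peak above
those beyond it. -/
def lowerFirst {n : ℕ} (σ : Fin n ≃ Fin n) (k : Fin n) : Pref n := σ.trans (revRank k)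

theorem lowerFirst_val {n : ℕ} (σ : Fin n ≃ Fin n) (k o : Fin n) :
    (lowerFirst σ k o).1 = if (σ o).1 ≤ k.1 then k.1 - (σ o).1 else (σ o).1 := rfl

/-- The preference `3421567…`, for objects numbered from `1` in the order `σ`. -/
def pref3421 {n : ℕ} (σ : Fin n ≃ Fin n) (hn : 4 ≤ n) : Pref n :=
  σ.trans ((Equiv.swap ⟨2, by omega⟩ ⟨3, by omega⟩).trans (revRank ⟨3, by omega⟩))

theorem pref3421_val {n : ℕ} (σ : Fin n ≃ Fin n) (hn : 4 ≤ n) (o : Fin n) :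
    (pref3421 σ hn o).1 = if (σ o).1 = 2 then 0 else if (σ o).1 = 3 then 1 else
      if (σ o).1 ≤ 3 then 3 - (σ o).1 else (σ o).1 := by
  simp only [pref3421, Equiv.trans_apply, revRank_val, Equiv.swap_apply_def, Fin.ext_iff]
  split_ifs <;> simp_all

theorem mem_spDomain_of_peak {n : ℕ} [NeZero n] {σ : Fin n ≃ Fin n} {p : Pref n} {t : Fin n}
    (ht : p t = 0)
    (hp : ∀ o o', ((σ o').1 < (σ o).1 ∧ (σ o).1 < (σ t).1) ∨
      ((σ t).1 < (σ o).1 ∧ (σ o).1 < (σ o').1) → (p o).1 < (p o').1) : p ∈ spDomain σ := by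
  intro o o' h
  rw [(topObj_eq_iff p t).2 ht] at h
  exact hp o o' h

theorem lowerFirst_top {n : ℕ} [NeZero n] (σ : Fin n ≃ Fin n) (k : Fin n) :
    lowerFirst σ k (σ.symm k) = 0 := by
  ext
  simp [lowerFirst_val]

theorem lowerFirst_mem {n : ℕ} [NeZero n] (σ : Fin n ≃ Fin n) (k : Fin n) :
    lowerFirst σ k ∈ spDomain σ := by
  refine mem_spDomain_of_peak (lowerFirst_top σ k) fun o o' h => ?_
  simp only [Equiv.apply_symm_apply] at h
  simp only [lowerFirst_val]
  split_ifs <;> omega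

theorem pref3421_top {n : ℕ} [NeZero n] (σ : Fin n ≃ Fin n) (hn : 4 ≤ n) :
    pref3421 σ hn (σ.symm ⟨2, by omega⟩) = 0 := by
  ext
  simp [pref3421_val]

theorem pref3421_mem {n : ℕ} [NeZero n] (σ : Fin n ≃ Fin n) (hn : 4 ≤ n) :
    pref3421 σ hn ∈ spDomain σ := by
  refine mem_spDomain_of_peak (pref3421_top σ hn) fun o o' h => ?_
  simp only [Equiv.apply_symm_apply] at h
  simp only [pref3421_val]
  split_ifs <;> omega

/-- The two agents at positions `0, 1` report `x`, those at positions `2, 3` report `y`, and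
everybody else is null. -/
def fourProfile {n : ℕ} (σ : Fin n ≃ Fin n) (x y : Pref n) (i : Fin n) : Pref n :=
  if (σ i).1 < 2 then x else if (σ i).1 < 4 then y else lowerFirst σ (σ i)

section allocation

variable {n : ℕ} [NeZero n] {σ : Fin n ≃ Fin n} {x y : Pref n} {i j k l : Fin n}

theorem fourProfile_inD (hx : x ∈ spDomain σ) (hy : y ∈ spDomain σ) :
    inD (spDomain σ) (fourProfile σ x y) := by
  intro i
  unfold fourProfile
  split_ifs
  exacts [hx, hy, lowerFirst_mem σ _]

theorem mem_active_fourProfile (hi : (σ i).1 < 2) (hj : 2 ≤ (σ j).1) (hxj : x j = 0)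
    (hyi : y i = 0) (a : Fin n) : a ∈ activeAgents (fourProfile σ x y) ↔ (σ a).1 < 4 := by
  simp only [activeAgents, Finset.mem_filter, Finset.mem_univ, true_and, ne_eq, topObj_eq_iff,
    fourProfile]
  split_ifs with h1 h2
  · refine ⟨fun _ => by omega, fun _ h => ?_⟩
    have := x.injective (h.trans hxj.symm)
    subst this; omega
  · refine ⟨fun _ => h2, fun _ h => ?_⟩
    have := y.injective (h.trans hyi.symm)
    subst this; omega
  · have := lowerFirst_top σ (σ a)
    simp_all

theorem acclaimedPair_fourProfile (hi : (σ i).1 < 2) (hk : (σ k).1 < 2) (hik : i ≠ k)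
    (hj : 2 ≤ (σ j).1) (hj' : (σ j).1 < 4) (hl : 2 ≤ (σ l).1) (hl' : (σ l).1 < 4) (hjl : j ≠ l)
    (hxj : x j = 0) (hyi : y i = 0) : acclaimedPair (fourProfile σ x y) i j := by
  have hact := mem_active_fourProfile hi hj hxj hyi
  have hval : ∀ a b : Fin n, a ≠ b → (σ a).1 ≠ (σ b).1 := fun a b hab h =>
    hab (σ.injective (Fin.ext h))
  have hik' := hval _ _ hik
  have hjl' := hval _ _ hjl
  refine ⟨{j, l}, {i, k}, ?_, ?_, ?_, ?_, by simp, by simp, ?_, ?_⟩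
  · rw [Finset.disjoint_left]
    intro a ha hb
    simp only [Finset.mem_insert, Finset.mem_singleton] at ha hb
    rcases ha with rfl | rfl <;> rcases hb with rfl | rfl <;> omega
  · ext a
    rw [hact]
    simp only [Finset.mem_union, Finset.mem_insert, Finset.mem_singleton]
    constructor
    · rintro ((rfl | rfl) | (rfl | rfl)) <;> omega
    · intro ha
      by_contra! hcon
      obtain ⟨⟨h1, h2⟩, h3, h4⟩ := hcon
      have h1 := hval _ _ h1
      have h2 := hval _ _ h2
      have h3 := hval _ _ h3
      have h4 := hval _ _ h4
      omega
  · rw [Finset.card_pair hjl, Finset.card_pair hik]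
  · rw [Finset.card_pair hjl]; norm_num
  · intro a ha
    simp only [Finset.mem_insert, Finset.mem_singleton] at ha
    refine best_eq_of_top ((hact i).2 (by omega)) ?_
    have : fourProfile σ x y a = y := by
      rcases ha with rfl | rfl <;> unfold fourProfile <;> rw [if_neg (by omega), if_pos (by omega)]
    rw [this, hyi]
  · intro a ha
    simp only [Finset.mem_insert, Finset.mem_singleton] at ha
    refine best_eq_of_top ((hact j).2 (by omega)) ?_
    have : fourProfile σ x y a = x := by
      rcases ha with rfl | rfl <;> unfold fourProfile <;> rw [if_pos (by omega)]
    rw [this, hxj]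

/-- At a profile where `j` tops the preference of the first two agents and `i` that of the
next two, `i` and `j` swap by equity⁺; the two remaining active agents `k` and `l` swap if both
want to, since null agents keep their endowments. -/
theorem allocation_at_profile {f : (Fin n → Pref n) → (Fin n → Fin n)}
    (hR : IsRule (spDomain σ) f) (hE : Efficient (spDomain σ) f)
    (hI : IndRational (spDomain σ) f) (hQ : EquityPlusBA (spDomain σ) f)
    (hx : x ∈ spDomain σ) (hy : y ∈ spDomain σ)
    (hi : (σ i).1 < 2) (hk : (σ k).1 < 2) (hik : i ≠ k)
    (hj : 2 ≤ (σ j).1) (hj' : (σ j).1 < 4) (hl : 2 ≤ (σ l).1) (hl' : (σ l).1 < 4) (hjl : j ≠ l)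
    (hxj : x j = 0) (hyi : y i = 0) :
    f (fourProfile σ x y) i = j ∧ f (fourProfile σ x y) j = i ∧
      (prefers x l k → prefers y k l →
        f (fourProfile σ x y) k = l ∧ f (fourProfile σ x y) l = k) := by
  have hD := fourProfile_inD hx hy
  obtain ⟨h1, h2⟩ := hQ _ hD i j
    (acclaimedPair_fourProfile hi hk hik hj hj' hl hl' hjl hxj hyi)
  refine ⟨h1, h2, fun hxlk hykl => ?_⟩
  have hb := hR _ hD
  have hval : ∀ a b : Fin n, a ≠ b → (σ a).1 ≠ (σ b).1 := fun a b hab h =>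
    hab (σ.injective (Fin.ext h))
  have hik' := hval _ _ hik
  have hjl' := hval _ _ hjl
  have hnull : ∀ a : Fin n, 4 ≤ (σ a).1 → f (fourProfile σ x y) a = a := by
    intro a ha
    have h3 : weakPref (fourProfile σ x y a) _ a := hI _ hD a
    have h4 : fourProfile σ x y a = lowerFirst σ (σ a) := by
      unfold fourProfile
      rw [if_neg (by omega), if_neg (by omega)]
    have h5 := lowerFirst_top σ (σ a)
    rw [Equiv.symm_apply_apply] at h5
    rw [h4, weakPref, h5] at h3
    exact (lowerFirst σ (σ a)).injective ((nonpos_iff_eq_zero.1 h3).trans h5.symm)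
  have hkl : ∀ a, a ≠ i → a ≠ j → (σ a).1 < 4 →
      f (fourProfile σ x y) a = k ∨ f (fourProfile σ x y) a = l := by
    intro a hai haj ha
    by_contra! hcon
    have g1 := hval _ _ hcon.1
    have g2 := hval _ _ hcon.2
    have g3 := hval _ _ fun h => haj (hb.1 (h.trans h2.symm))
    have g4 := hval _ _ fun h => hai (hb.1 (h.trans h1.symm))
    have g5 : (σ (f (fourProfile σ x y) a)).1 < 4 := by
      by_contra! hge
      have := hb.1 (hnull _ hge)
      rw [this] at hge
      omega
    omega
  refine (hE _ hD).swap hb (hkl k hik.symm (by rintro rfl; omega) (by omega))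
    (hkl l (by rintro rfl; omega) hjl.symm hl') ?_ ?_
  · have : fourProfile σ x y k = x := by unfold fourProfile; rw [if_pos hk]
    rwa [this]
  · have : fourProfile σ x y l = y := by
      unfold fourProfile; rw [if_neg (by omega), if_pos hl']
    rwa [this]

end allocation

/-- A type with peak `o` strictly prefers `o` to anything else; so it cannot be separated from another
type if it misses `o` at one profile while the other type gets `o` at another profile. -/
theorem not_weakPref_top {n : ℕ} [NeZero n] {p : Pref n} {o a : Fin n} (hp : p o = 0)
    (ha : a ≠ o) : ¬ weakPref p a o := by
  intro h
  rw [weakPref, hp] at h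
  exact ha (p.injective ((nonpos_iff_eq_zero.1 h).trans hp.symm))

theorem no_equityPlus_OSP_rule (n : ℕ) [NeZero n] (hn : 4 ≤ n) (σ : Fin n ≃ Fin n) :
    ¬ ∃ f : (Fin n → Pref n) → (Fin n → Fin n),
        IsRule (spDomain σ) f ∧ Efficient (spDomain σ) f ∧
        IndRational (spDomain σ) f ∧ OSP (spDomain σ) f ∧
        EquityPlusBA (spDomain σ) f := by
  rintro ⟨f, hR, hE, hI, hO, hQ⟩
  have hσ : ∀ m : Fin n, (σ (σ.symm m)).1 = m.1 := fun m => by simp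
  obtain ⟨a, ha⟩ : ∃ a, (σ a).1 = 0 := ⟨_, hσ ⟨0, by omega⟩⟩
  obtain ⟨b, hb⟩ : ∃ b, (σ b).1 = 1 := ⟨_, hσ ⟨1, by omega⟩⟩
  obtain ⟨c, hc⟩ : ∃ c, (σ c).1 = 2 := ⟨_, hσ ⟨2, by omega⟩⟩
  obtain ⟨d, hd⟩ : ∃ d, (σ d).1 = 3 := ⟨_, hσ ⟨3, by omega⟩⟩
  have hab : a ≠ b := by rintro rfl; omega
  have hcd : c ≠ d := by rintro rfl; omega
  have hbd : b ≠ d := by rintro rfl; omega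
  obtain ⟨p3, hp3⟩ : ∃ p, p = pref3421 σ hn := ⟨_, rfl⟩
  obtain ⟨p4, hp4⟩ : ∃ p, p = lowerFirst σ ⟨3, by omega⟩ := ⟨_, rfl⟩
  obtain ⟨q1, hq1⟩ : ∃ p, p = lowerFirst σ ⟨0, by omega⟩ := ⟨_, rfl⟩
  obtain ⟨q2, hq2⟩ : ∃ p, p = lowerFirst σ ⟨1, by omega⟩ := ⟨_, rfl⟩
  have mp3 : p3 ∈ spDomain σ := hp3 ▸ pref3421_mem σ hn
  have mp4 : p4 ∈ spDomain σ := hp4 ▸ lowerFirst_mem σ _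
  have mq1 : q1 ∈ spDomain σ := hq1 ▸ lowerFirst_mem σ _
  have mq2 : q2 ∈ spDomain σ := hq2 ▸ lowerFirst_mem σ _
  have tp3 : p3 c = 0 := by ext; simp [hp3, pref3421_val, hc]
  have tp4 : p4 d = 0 := by ext; simp [hp4, lowerFirst_val, hd]
  have tq1 : q1 a = 0 := by ext; simp [hq1, lowerFirst_val, ha]
  have tq2 : q2 b = 0 := by ext; simp [hq2, lowerFirst_val, hb]
  -- at each profile, the acclaimed pair swaps; at three of them so do the other two agents
  obtain ⟨e1, e2, e3⟩ := allocation_at_profile hR hE hI hQ mp3 mq1 (i := a) (k := b) (j := c)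
    (l := d) (by omega) (by omega) hab (by omega) (by omega) (by omega) (by omega) hcd tp3 tq1
  obtain ⟨e3, e4⟩ := e3 (by simp [prefers, Fin.lt_def, hp3, pref3421_val, hb, hd])
    (by simp [prefers, Fin.lt_def, hq1, lowerFirst_val, hb, hd])
  obtain ⟨g1, g2, -⟩ := allocation_at_profile hR hE hI hQ mp3 mq2 (i := b) (k := a) (j := c)
    (l := d) (by omega) (by omega) hab.symm (by omega) (by omega) (by omega) (by omega) hcd tp3 tq2
  obtain ⟨u1, u2, u3⟩ := allocation_at_profile hR hE hI hQ mp4 mq1 (i := a) (k := b) (j := d)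
    (l := c) (by omega) (by omega) hab (by omega) (by omega) (by omega) (by omega) hcd.symm tp4 tq1
  obtain ⟨u3, u4⟩ := u3 (by simp [prefers, Fin.lt_def, hp4, lowerFirst_val, hb, hc])
    (by simp [prefers, Fin.lt_def, hq1, lowerFirst_val, hb, hc])
  obtain ⟨v1, v2, v3⟩ := allocation_at_profile hR hE hI hQ mp4 mq2 (i := b) (k := a) (j := d)
    (l := c) (by omega) (by omega) hab.symm (by omega) (by omega) (by omega) (by omega) hcd.symm
    tp4 tq2
  obtain ⟨v3, v4⟩ := v3 (by simp [prefers, Fin.lt_def, hp4, lowerFirst_val, ha, hc])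
    (by simp [prefers, Fin.lt_def, hq2, lowerFirst_val, ha, hc])
  obtain ⟨i, P₀, ⟨x₀, hx₀, y₀, hy₀, rfl⟩, Q₀, ⟨x₁, hx₁, y₁, hy₁, rfl⟩, hne, hsplit⟩ :=
    OSP.exists_split hO {P | ∃ x, (x = p3 ∨ x = p4) ∧ ∃ y, (y = q1 ∨ y = q2) ∧ P = fourProfile σ x y}
      (by
        rintro P ⟨x, hx, y, hy, rfl⟩
        exact fourProfile_inD (by rcases hx with rfl | rfl <;> assumption)
          (by rcases hy with rfl | rfl <;> assumption))
      ⟨_, ⟨p3, .inl rfl, q1, .inl rfl, rfl⟩, _, ⟨p4, .inr rfl, q1, .inl rfl, rfl⟩, fun h =>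
        hcd (by rw [← e1, ← u1, h])⟩
  have hsp : ∀ x x' y y', (x = p3 ∨ x = p4) → (x' = p3 ∨ x' = p4) → (y = q1 ∨ y = q2) →
      (y' = q1 ∨ y' = q2) → _ := fun x x' y y' hx hx' hy hy' =>
    hsplit _ ⟨x, hx, y, hy, rfl⟩ _ ⟨x', hx', y', hy', rfl⟩
  have eqσ : ∀ z : Fin n, (σ i).1 = (σ z).1 → i = z := fun z h => σ.injective (Fin.ext h)
  unfold fourProfile at hne
  by_cases h2 : (σ i).1 < 2
  · -- `i` has type `p3` or `p4`
    have hfp : ∀ x y, fourProfile σ x y i = x := fun x y => by unfold fourProfile; rw [if_pos h2]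
    rw [if_pos h2, if_pos h2] at hne
    have key : ∀ y y', (y = q1 ∨ y = q2) → (y' = q1 ∨ y' = q2) →
        weakPref p3 (f (fourProfile σ p3 y) i) (f (fourProfile σ p4 y') i) := by
      intro y y' hy hy'
      rcases hx₀ with rfl | rfl <;> rcases hx₁ with rfl | rfl
      · exact absurd rfl hne
      · simpa [hfp] using (hsp _ _ y y' (.inl rfl) (.inr rfl) hy hy' (by simp [hfp])
          (by simp [hfp])).1
      · simpa [hfp] using (hsp _ _ y' y (.inr rfl) (.inl rfl) hy' hy (by simp [hfp])
          (by simp [hfp])).2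
      · exact absurd rfl hne
    rcases (by omega : (σ i).1 = 0 ∨ (σ i).1 = 1) with h | h
    · obtain rfl := eqσ a (by omega)
      have := key q2 q2 (.inr rfl) (.inr rfl)
      rw [v3] at this
      exact not_weakPref_top tp3 (fun h => hab ((hR _ (fourProfile_inD mp3 mq2)).1
        (h.trans g1.symm))) this
    · obtain rfl := eqσ b (by omega)
      have := key q1 q1 (.inl rfl) (.inl rfl)
      rw [e3, u3] at this
      exact not_weakPref_top tp3 hcd.symm this
  by_cases h4 : (σ i).1 < 4
  · -- `i` has type `q1` or `q2`
    have hfp : ∀ x y, fourProfile σ x y i = y := fun x y => by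
      unfold fourProfile; rw [if_neg h2, if_pos h4]
    rw [if_neg h2, if_neg h2, if_pos h4, if_pos h4] at hne
    have key : ∀ x x', (x = p3 ∨ x = p4) → (x' = p3 ∨ x' = p4) →
        weakPref q2 (f (fourProfile σ x q2) i) (f (fourProfile σ x' q1) i) := by
      intro x x' hx hx'
      rcases hy₀ with rfl | rfl <;> rcases hy₁ with rfl | rfl
      · exact absurd rfl hne
      · simpa [hfp] using (hsp x' x _ _ hx' hx (.inl rfl) (.inr rfl) (by simp [hfp])
          (by simp [hfp])).2
      · simpa [hfp] using (hsp x x' _ _ hx hx' (.inr rfl) (.inl rfl) (by simp [hfp])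
          (by simp [hfp])).1
      · exact absurd rfl hne
    rcases (by omega : (σ i).1 = 2 ∨ (σ i).1 = 3) with h | h
    · obtain rfl := eqσ c (by omega)
      have := key p4 p4 (.inr rfl) (.inr rfl)
      rw [v4, u4] at this
      exact not_weakPref_top tq2 hab this
    · obtain rfl := eqσ d (by omega)
      have := key p3 p3 (.inl rfl) (.inl rfl)
      rw [e4] at this
      exact not_weakPref_top tq2 (fun h => hcd ((hR _ (fourProfile_inD mp3 mq2)).1
        (g2.trans h.symm))) this
  · rw [if_neg h2, if_neg h2, if_neg h4, if_neg h4] at hne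
    exact hne rfl
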